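/- (Ando's dilation theorem) For any two commuting contractions A, B on a Hilbert space H, there exist a Hilbert space K containing H and commuting unitary operators U, V on K such that for all nonnegative integers m, n and all x, y ∈ H, ⟨AᵐBⁿx, y⟩ = ⟨UᵐVⁿx, y⟩. -/

import Mathlib

open scoped InnerProductSpace

universe u

/-!
For a contraction `T`, the semi-inner product `⟪x, y⟫ - ⟪T x, T y⟫` yields a defect map `d` with
`‖d x‖² = ‖x‖² - ‖T x‖²`. Let `a`, `b` be the defect maps of `A`, `B`, with values in orthogonal
subspaces. Since `A B = B A`, the vectors `a x + b (A x)` and `a (B x) + b x` have the same norm, so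
after enlarging the space some unitary `U` sends the first to the second.

Let `s` be an isometry of `ℓ²`, `e` a unit vector orthogonal to its range, and `P` the projection
onto a closed subspace containing the range of `b` and orthogonal to that of `a`. The isometries
`τ₁ = (1 ⊗ P + s ⊗ (1 - P)) (1 ⊗ U)⁻¹` and `τ₂ = (1 ⊗ U) (1 ⊗ (1 - P) + s ⊗ P)` satisfy
`τ₁ τ₂ = s ⊗ 1 = τ₂ τ₁` (Berger-Coburn-Lebow), and the choice of `U` makes the Schäffer-type
operators `(h, l) ↦ (A h, e ⊗ a h + τ₁ l)` and `(h, l) ↦ (B h, e ⊗ U (b h) + τ₂ l)` commuting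
isometries. Two commuting isometries `V`, `W` become invertible on the direct limit along the
powers of `V W`, hence extend to commuting unitaries on its completion.
-/

open scoped TensorProduct

universe v

variable {𝕜 : Type v} [RCLike 𝕜]

theorem exists_hilbert_completion {E : Type u} [AddCommGroup E] [Module 𝕜 E]
    (c : PreInnerProductSpace.Core 𝕜 E) :
    ∃ (L : Type u) (_ : NormedAddCommGroup L) (_ : InnerProductSpace 𝕜 L) (_ : CompleteSpace L)
      (κ : E →ₗ[𝕜] L), DenseRange κ ∧ ∀ x y, ⟪κ x, κ y⟫_𝕜 = c.inner x y := by
  let _ := InnerProductSpace.Core.toSeminormedAddCommGroup (c := c)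
  let _ := InnerProductSpace.ofCore c
  exact ⟨UniformSpace.Completion E, inferInstance, inferInstance, inferInstance,
    UniformSpace.Completion.toComplₗᵢ.toLinearMap, UniformSpace.Completion.denseRange_coe,
    UniformSpace.Completion.inner_coe⟩

section DirectLimit

variable {ι : Type*} [Preorder ι] [IsDirectedOrder ι] [Nonempty ι] {G : ι → Type*}
  [∀ i, SeminormedAddCommGroup (G i)] [∀ i, InnerProductSpace 𝕜 (G i)]
  (f : ∀ i j, i ≤ j → G i →ₗᵢ[𝕜] G j) [DirectedSystem G (f · · ·)]

/-- The semi-inner product on the direct limit of a system of linear isometries, computed on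
representatives at a common stage. -/
noncomputable abbrev directLimitCore : PreInnerProductSpace.Core 𝕜 (DirectLimit G f) where
  inner := DirectLimit.lift₂ f f (fun _ x y => ⟪x, y⟫_𝕜)
    fun i j hij x y => ((f i j hij).inner_map_map x y).symm
  conj_inner_symm x y := by
    induction x, y using DirectLimit.induction₂ with | _ i x y
    simp only [DirectLimit.lift₂_def, inner_conj_symm]
  re_inner_nonneg x := by
    induction x using DirectLimit.induction with | _ i x
    simpa only [DirectLimit.lift₂_def] using inner_self_nonneg
  add_left x y z := by
    induction x, y, z using DirectLimit.induction₃ with | _ i x y z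
    simp only [DirectLimit.add_def, DirectLimit.lift₂_def, inner_add_left]
  smul_left x y r := by
    induction x, y using DirectLimit.induction₂ with | _ i x y
    simp only [DirectLimit.smul_def, DirectLimit.lift₂_def, inner_smul_left]

theorem directLimitCore_inner_mk (i : ι) (x y : G i) :
    (directLimitCore f).inner ⟦⟨i, x⟩⟧ ⟦⟨i, y⟩⟧ = ⟪x, y⟫_𝕜 :=
  DirectLimit.lift₂_def ..

end DirectLimit

section UnitaryExtension

variable {K : Type u} [NormedAddCommGroup K] [InnerProductSpace 𝕜 K]

/-- The directed system `K → K → K → ⋯` in which every step is `S`. -/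
def powSystem (S : K →ₗᵢ[𝕜] K) (i j : ℕ) (_ : i ≤ j) : K →ₗᵢ[𝕜] K := S ^ (j - i)

instance (S : K →ₗᵢ[𝕜] K) : DirectedSystem (fun _ : ℕ => K) (powSystem S · · ·) where
  map_self i x := by simp [powSystem]
  map_map k j i hij hjk x := by
    simp only [powSystem]
    rw [← Function.comp_apply (f := ⇑(S ^ _)), ← LinearIsometry.coe_mul, ← pow_add,
      Nat.sub_add_sub_cancel hjk hij]

/-- The direct limit of `powSystem S`, a space containing `K` on which `S` becomes invertible. -/
abbrev PowLimit (S : K →ₗᵢ[𝕜] K) := DirectLimit (fun _ : ℕ => K) (powSystem S)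

/-- The operator induced on `PowLimit S` by applying `T` at every stage. -/
noncomputable def powLimitMap {S T : K →ₗᵢ[𝕜] K} (hST : Commute S T) :
    PowLimit S →ₗ[𝕜] PowLimit S :=
  DirectLimit.Module.lift 𝕜 ℕ _ (powSystem S)
    (fun i => DirectLimit.Module.of 𝕜 ℕ _ (powSystem S) i ∘ₗ T.toLinearMap) fun i j hij x => by
      have hcomm : T (powSystem S i j hij x) = powSystem S i j hij (T x) :=
        DFunLike.congr_fun (hST.pow_left (j - i)).eq.symm x
      simp only [LinearMap.comp_apply, LinearIsometry.coe_toLinearMap, hcomm,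
        DirectLimit.Module.of_f]

theorem powLimitMap_mk {S T : K →ₗᵢ[𝕜] K} (hST : Commute S T) (i : ℕ) (x : K) :
    powLimitMap hST ⟦⟨i, x⟩⟧ = ⟦⟨i, T x⟩⟧ :=
  rfl

theorem powLimit_mk_succ (S : K →ₗᵢ[𝕜] K) (i : ℕ) (x : K) :
    (⟦⟨i + 1, S x⟩⟧ : PowLimit S) = ⟦⟨i, x⟩⟧ := by
  simpa [powSystem] using DirectLimit.mk_apply (f := powSystem S) i (i + 1) x i.le_succ

theorem powLimitMap_bijective {S T T' : K →ₗᵢ[𝕜] K} (hST : Commute S T) (hT : T * T' = S) :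
    Function.Bijective (powLimitMap hST) := by
  constructor
  · intro z w hzw
    induction z, w using DirectLimit.induction₂ with | _ i x y
    have hTxy : T x = T y :=
      DirectLimit.mk_injective _ (fun i j hij => (powSystem S i j hij).injective) i hzw
    rw [T.injective hTxy]
  · intro z
    induction z using DirectLimit.induction with | _ i x
    refine ⟨⟦⟨i + 1, T' x⟩⟧, ?_⟩
    rw [powLimitMap_mk, ← powLimit_mk_succ S i, ← hT, LinearIsometry.coe_mul, Function.comp_apply]

theorem exists_unitary_extension (V W : K →ₗᵢ[𝕜] K) (hVW : Commute V W) :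
    ∃ (L : Type u) (_ : NormedAddCommGroup L) (_ : InnerProductSpace 𝕜 L) (_ : CompleteSpace L)
      (κ : K →ₗᵢ[𝕜] L) (U₁ U₂ : L ≃ₗᵢ[𝕜] L),
      Commute U₁ U₂ ∧ Function.Semiconj κ V U₁ ∧ Function.Semiconj κ W U₂ := by
  have hV : Commute (V * W) V := (Commute.refl V).mul_left hVW.symm
  have hW : Commute (V * W) W := hVW.mul_left (Commute.refl W)
  obtain ⟨L, _, _, _, κ, hκ, hinner⟩ :=
    exists_hilbert_completion (directLimitCore (powSystem (V * W)))
  have hext (T T' : K →ₗᵢ[𝕜] K) (hT : Commute (V * W) T) (hTT' : T * T' = V * W) :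
      ∃ U : L ≃ₗᵢ[𝕜] L, ∀ z, U (κ z) = κ (powLimitMap hT z) := by
    let e := LinearEquiv.ofBijective (powLimitMap hT) (powLimitMap_bijective hT hTT')
    have hnorm (z) : ‖κ (e z)‖ = ‖κ z‖ := by
      induction z using DirectLimit.induction with | _ i x
      rw [@norm_eq_sqrt_re_inner 𝕜, @norm_eq_sqrt_re_inner 𝕜, hinner, hinner]
      simp [e, powLimitMap_mk, directLimitCore_inner_mk]
    exact ⟨e.extendOfIsometry κ κ hκ hκ hnorm, e.extendOfIsometry_eq κ κ hκ hκ hnorm⟩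
  obtain ⟨U₁, hU₁⟩ := hext V W hV rfl
  obtain ⟨U₂, hU₂⟩ := hext W V hW hVW.eq.symm
  let κ₀ : K →ₗᵢ[𝕜] L := (κ ∘ₗ DirectLimit.Module.of 𝕜 ℕ _ (powSystem (V * W)) 0).isometryOfInner
    fun x y => (hinner _ _).trans (directLimitCore_inner_mk (powSystem (V * W)) 0 x y)
  refine ⟨L, ‹_›, ‹_›, ‹_›, κ₀, U₁, U₂, ?_, fun x => (hU₁ ⟦⟨0, x⟩⟧).symm,
    fun x => (hU₂ ⟦⟨0, x⟩⟧).symm⟩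
  ext l
  induction l using hκ.induction_on with
  | hp => exact isClosed_eq (U₁ * U₂).continuous (U₂ * U₁).continuous
  | ih z =>
    induction z using DirectLimit.induction with | _ i x
    simp only [LinearIsometryEquiv.coe_mul, Function.comp_apply, hU₁, hU₂, powLimitMap_mk]
    exact congrArg (fun y => κ ⟦⟨i, y⟩⟧) (DFunLike.congr_fun hVW.eq x)

end UnitaryExtension

section Defect

variable {H : Type u} {H' : Type*} [NormedAddCommGroup H] [InnerProductSpace 𝕜 H]
  [NormedAddCommGroup H'] [InnerProductSpace 𝕜 H']

/-- The semi-inner product `⟪(1 - T⋆ T) x, y⟫` of a contraction, written without the adjoint so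
that `H` and `H'` need not be complete. -/
noncomputable abbrev defectCore (T : H →L[𝕜] H') (hT : ‖T‖ ≤ 1) :
    PreInnerProductSpace.Core 𝕜 H where
  inner x y := ⟪x, y⟫_𝕜 - ⟪T x, T y⟫_𝕜
  conj_inner_symm x y := by simp only [map_sub, inner_conj_symm]
  re_inner_nonneg x := by
    have hTx : ‖T x‖ ≤ ‖x‖ := T.le_of_opNorm_le_of_le hT le_rfl |>.trans_eq (one_mul _)
    simp only [map_sub, inner_self_eq_norm_sq, sub_nonneg]
    gcongr
  add_left x y z := by simp only [map_add, inner_add_left]; ring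
  smul_left x y r := by simp only [map_smul, inner_smul_left]; ring

theorem exists_defect_map (T : H →L[𝕜] H') (hT : ‖T‖ ≤ 1) :
    ∃ (D : Type u) (_ : NormedAddCommGroup D) (_ : InnerProductSpace 𝕜 D) (_ : CompleteSpace D)
      (d : H →ₗ[𝕜] D), ∀ x, ‖d x‖ ^ 2 = ‖x‖ ^ 2 - ‖T x‖ ^ 2 := by
  obtain ⟨D, _, _, _, d, -, hd⟩ := exists_hilbert_completion (defectCore T hT)
  refine ⟨D, ‹_›, ‹_›, ‹_›, d, fun x => ?_⟩
  rw [← inner_self_eq_norm_sq (𝕜 := 𝕜), hd]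
  change RCLike.re (⟪x, x⟫_𝕜 - ⟪T x, T x⟫_𝕜) = _
  simp only [map_sub, inner_self_eq_norm_sq]

end Defect

section Prod

variable (𝕜) (E F : Type*) [NormedAddCommGroup E] [InnerProductSpace 𝕜 E]
  [NormedAddCommGroup F] [InnerProductSpace 𝕜 F]

/-- The embedding of the first summand into the orthogonal direct sum. -/
noncomputable def prodInl : E →ₗᵢ[𝕜] WithLp 2 (E × F) where
  toLinearMap := (WithLp.linearEquiv 2 𝕜 (E × F)).symm ∘ₗ LinearMap.inl 𝕜 E F
  norm_map' x := by simp

/-- The embedding of the second summand into the orthogonal direct sum. -/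
noncomputable def prodInr : F →ₗᵢ[𝕜] WithLp 2 (E × F) where
  toLinearMap := (WithLp.linearEquiv 2 𝕜 (E × F)).symm ∘ₗ LinearMap.inr 𝕜 E F
  norm_map' x := by simp

variable {E F}

theorem prodInl_add_prodInr (x : E) (y : F) :
    prodInl 𝕜 E F x + prodInr 𝕜 E F y = WithLp.toLp 2 (x, y) := by
  refine WithLp.ofLp_injective 2 (Prod.ext ?_ ?_) <;> simp [prodInl, prodInr]

theorem inner_prodInl_right (z : WithLp 2 (E × F)) (x : E) :
    ⟪z, prodInl 𝕜 E F x⟫_𝕜 = ⟪z.fst, x⟫_𝕜 := by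
  simp [prodInl]

theorem inner_prodInl_prodInr (x : E) (y : F) : ⟪prodInl 𝕜 E F x, prodInr 𝕜 E F y⟫_𝕜 = 0 := by
  simp [prodInl, prodInr]

end Prod

section Halmos

variable {Z Z' : Type*} [NormedAddCommGroup Z] [InnerProductSpace 𝕜 Z]
  [NormedAddCommGroup Z'] [InnerProductSpace 𝕜 Z']
  {M : Submodule 𝕜 Z} {N : Submodule 𝕜 Z'} [M.HasOrthogonalProjection] [N.HasOrthogonalProjection]

/-- The map acting as `e` from the copy of `M` in the first summand to that of `N`, as `e⁻¹` from
the copy of `N` in the second summand to that of `M`, and as the identity on `Mᗮ` and `Nᗮ`, which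
thereby change position in the sum. -/
noncomputable def crossMap (e : M ≃ₗᵢ[𝕜] N) : WithLp 2 (Z × Z') →ₗ[𝕜] WithLp 2 (Z' × Z) where
  toFun z := WithLp.toLp 2
    (e (M.orthogonalProjectionOnto z.fst) + Nᗮ.starProjection z.snd,
      Mᗮ.starProjection z.fst + e.symm (N.orthogonalProjectionOnto z.snd))
  map_add' z w := by
    refine WithLp.ofLp_injective 2 (Prod.ext ?_ ?_) <;> simp <;> abel
  map_smul' r z := by
    refine WithLp.ofLp_injective 2 (Prod.ext ?_ ?_) <;> simp

theorem crossMap_symm_crossMap (e : M ≃ₗᵢ[𝕜] N) (z : WithLp 2 (Z × Z')) :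
    crossMap e.symm (crossMap e z) = z := by
  have hM :
      M.orthogonalProjectionOnto (M.starProjection z.fst) = M.orthogonalProjectionOnto z.fst :=
    M.orthogonalProjectionOnto_mem_subspace_eq_self _
  have hN :
      N.orthogonalProjectionOnto (N.starProjection z.snd) = N.orthogonalProjectionOnto z.snd :=
    N.orthogonalProjectionOnto_mem_subspace_eq_self _
  have hM' : M.starProjection (M.starProjection z.fst) = M.starProjection z.fst :=
    congrArg Subtype.val hM
  have hN' : N.starProjection (N.starProjection z.snd) = N.starProjection z.snd :=
    congrArg Subtype.val hN
  refine WithLp.ofLp_injective 2 (Prod.ext ?_ ?_) <;> simp [crossMap, hM, hM', hN, hN']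

theorem norm_crossMap (e : M ≃ₗᵢ[𝕜] N) (z : WithLp 2 (Z × Z')) : ‖crossMap e z‖ = ‖z‖ := by
  have hfst : ⟪(e (M.orthogonalProjectionOnto z.fst) : Z'), Nᗮ.starProjection z.snd⟫_𝕜 = 0 :=
    N.inner_right_of_mem_orthogonal (e _).2 (Nᗮ.starProjection_apply_mem _)
  have hsnd : ⟪Mᗮ.starProjection z.fst, (e.symm (N.orthogonalProjectionOnto z.snd) : Z)⟫_𝕜 = 0 :=
    M.inner_left_of_mem_orthogonal (e.symm _).2 (Mᗮ.starProjection_apply_mem _)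
  rw [← sq_eq_sq₀ (norm_nonneg _) (norm_nonneg _), WithLp.prod_norm_sq_eq_of_L2,
    WithLp.prod_norm_sq_eq_of_L2]
  change ‖_ + _‖ ^ 2 + ‖_ + _‖ ^ 2 = _
  rw [pow_two ‖_ + _‖, pow_two ‖_ + _‖,
    norm_add_sq_eq_norm_sq_add_norm_sq_of_inner_eq_zero _ _ hfst,
    norm_add_sq_eq_norm_sq_add_norm_sq_of_inner_eq_zero _ _ hsnd,
    M.norm_sq_eq_add_norm_sq_projection z.fst, N.norm_sq_eq_add_norm_sq_projection z.snd]
  simp only [Submodule.norm_coe, Submodule.starProjection_apply, LinearIsometryEquiv.norm_map]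
  ring

/-- The map `crossMap e` as a unitary; for `Z = Z'` it extends the partial isometry `e` to a
unitary of `Z ⊕ Z`. -/
noncomputable def crossIsometryEquiv (e : M ≃ₗᵢ[𝕜] N) :
    WithLp 2 (Z × Z') ≃ₗᵢ[𝕜] WithLp 2 (Z' × Z) where
  __ := crossMap e
  invFun := crossMap e.symm
  left_inv := crossMap_symm_crossMap e
  right_inv := crossMap_symm_crossMap e.symm
  norm_map' := norm_crossMap e

theorem crossIsometryEquiv_prodInl (e : M ≃ₗᵢ[𝕜] N) (x : M) :
    crossIsometryEquiv e (prodInl 𝕜 Z Z' x) = prodInl 𝕜 Z' Z (e x) := by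
  refine WithLp.ofLp_injective 2 (Prod.ext ?_ ?_) <;> simp [crossIsometryEquiv, crossMap, prodInl]

end Halmos

theorem exists_unitary_intertwining {H : Type*} {Z : Type u} [NormedAddCommGroup H]
    [InnerProductSpace 𝕜 H] [NormedAddCommGroup Z] [InnerProductSpace 𝕜 Z] [CompleteSpace Z]
    (c c' : H →ₗ[𝕜] Z) (h : ∀ x, ‖c' x‖ = ‖c x‖) :
    ∃ (F : Type u) (_ : NormedAddCommGroup F) (_ : InnerProductSpace 𝕜 F) (_ : CompleteSpace F)
      (ι : Z →ₗᵢ[𝕜] F) (U : F ≃ₗᵢ[𝕜] F), ∀ x, U (ι (c x)) = ι (c' x) := by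
  let M (g : H →ₗ[𝕜] Z) := (LinearMap.range g).topologicalClosure
  let γ (g : H →ₗ[𝕜] Z) : H →ₗ[𝕜] M g :=
    g.codRestrict (M g) fun x => Submodule.le_topologicalClosure _ (LinearMap.mem_range_self g x)
  have hγ (g : H →ₗ[𝕜] Z) : DenseRange (γ g) := by
    rw [DenseRange, Subtype.dense_iff, ← Set.range_comp]
    exact subset_rfl
  have (g : H →ₗ[𝕜] Z) : CompleteSpace (M g) :=
    (Submodule.isClosed_topologicalClosure _).completeSpace_coe
  let e : M c ≃ₗᵢ[𝕜] M c' :=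
    (LinearEquiv.refl 𝕜 H).extendOfIsometry (γ c) (γ c') (hγ c) (hγ c') h
  have he (x : H) : e (γ c x) = γ c' x := LinearEquiv.extendOfIsometry_eq ..
  refine ⟨WithLp 2 (Z × Z), inferInstance, inferInstance, inferInstance, prodInl 𝕜 Z Z,
    crossIsometryEquiv e, fun x => ?_⟩
  have hcx : (c x : Z) = (γ c x : M c) := rfl
  rw [hcx, crossIsometryEquiv_prodInl, he]
  rfl

section Schaeffer

variable {H L : Type*} [NormedAddCommGroup H] [InnerProductSpace 𝕜 H]
  [NormedAddCommGroup L] [InnerProductSpace 𝕜 L]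

/-- The isometry `(h, l) ↦ (T h, D h + τ l)` with block matrix `[[T, 0], [D, τ]]`, a Schäffer-type
dilation of `T`. -/
noncomputable def schaefferIsometry (T : H →ₗ[𝕜] H) (D : H →ₗ[𝕜] L) (τ : L →ₗᵢ[𝕜] L)
    (hnorm : ∀ x, ‖D x‖ ^ 2 = ‖x‖ ^ 2 - ‖T x‖ ^ 2) (horth : ∀ x l, ⟪D x, τ l⟫_𝕜 = 0) :
    WithLp 2 (H × L) →ₗᵢ[𝕜] WithLp 2 (H × L) where
  toFun z := WithLp.toLp 2 (T z.fst, D z.fst + τ z.snd)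
  map_add' z w := by
    refine WithLp.ofLp_injective 2 (Prod.ext ?_ ?_) <;> simp; abel
  map_smul' r z := by
    refine WithLp.ofLp_injective 2 (Prod.ext ?_ ?_) <;> simp
  norm_map' z := by
    have hsnd : ‖D z.fst + τ z.snd‖ ^ 2 = ‖D z.fst‖ ^ 2 + ‖z.snd‖ ^ 2 := by
      rw [pow_two, norm_add_sq_eq_norm_sq_add_norm_sq_of_inner_eq_zero _ _ (horth z.fst z.snd),
        τ.norm_map, ← pow_two, ← pow_two]
    rw [← sq_eq_sq₀ (norm_nonneg _) (norm_nonneg _), WithLp.prod_norm_sq_eq_of_L2,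
      WithLp.prod_norm_sq_eq_of_L2 z]
    change ‖T z.fst‖ ^ 2 + ‖D z.fst + τ z.snd‖ ^ 2 = _
    rw [hsnd, hnorm]
    ring

theorem commute_schaefferIsometry {T₁ T₂ : H →ₗ[𝕜] H} {D₁ D₂ : H →ₗ[𝕜] L} {τ₁ τ₂ : L →ₗᵢ[𝕜] L}
    (hnorm₁ : ∀ x, ‖D₁ x‖ ^ 2 = ‖x‖ ^ 2 - ‖T₁ x‖ ^ 2) (horth₁ : ∀ x l, ⟪D₁ x, τ₁ l⟫_𝕜 = 0)
    (hnorm₂ : ∀ x, ‖D₂ x‖ ^ 2 = ‖x‖ ^ 2 - ‖T₂ x‖ ^ 2) (horth₂ : ∀ x l, ⟪D₂ x, τ₂ l⟫_𝕜 = 0)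
    (hT : Function.Commute T₁ T₂) (hD : ∀ x, D₁ (T₂ x) + τ₁ (D₂ x) = D₂ (T₁ x) + τ₂ (D₁ x))
    (hτ : Function.Commute τ₁ τ₂) :
    Commute (schaefferIsometry T₁ D₁ τ₁ hnorm₁ horth₁)
      (schaefferIsometry T₂ D₂ τ₂ hnorm₂ horth₂) := by
  refine LinearIsometry.ext fun z => WithLp.ofLp_injective 2 (Prod.ext (hT z.fst) ?_)
  change D₁ (T₂ z.fst) + τ₁ (D₂ z.fst + τ₂ z.snd) = D₂ (T₁ z.fst) + τ₂ (D₁ z.fst + τ₁ z.snd)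
  rw [map_add, map_add, ← add_assoc, ← add_assoc, hD, hτ z.snd]

end Schaeffer

section HalfShift

variable {E F : Type*} [NormedAddCommGroup E] [InnerProductSpace 𝕜 E]
  [NormedAddCommGroup F] [InnerProductSpace 𝕜 F]

theorem inner_starProjection_add_inner_starProjection_orthogonal (S : Submodule 𝕜 F)
    [S.HasOrthogonalProjection] (f g : F) :
    ⟪S.starProjection f, S.starProjection g⟫_𝕜 + ⟪Sᗮ.starProjection f, Sᗮ.starProjection g⟫_𝕜 =
      ⟪f, g⟫_𝕜 := by
  rw [S.inner_starProjection_left_eq_right, Sᗮ.inner_starProjection_left_eq_right,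
    S.starProjection_eq_self_iff.mpr (S.starProjection_apply_mem g),
    Sᗮ.starProjection_eq_self_iff.mpr (Sᗮ.starProjection_apply_mem g), ← inner_add_right,
    S.starProjection_add_starProjection_orthogonal]

/-- The isometry `1 ⊗ P + s ⊗ (1 - P)`, where `P` is the orthogonal projection onto `S`: one of the
two factors of `s ⊗ 1` in the Berger-Coburn-Lebow model. -/
noncomputable def halfShift (s : E →ₗᵢ[𝕜] E) (S : Submodule 𝕜 F) [S.HasOrthogonalProjection] :
    E ⊗[𝕜] F →ₗᵢ[𝕜] E ⊗[𝕜] F :=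
  (TensorProduct.map LinearMap.id S.starProjection.toLinearMap +
    TensorProduct.map s.toLinearMap Sᗮ.starProjection.toLinearMap).isometryOfInner fun x y => by
      induction x with
      | zero => simp
      | add x₁ x₂ h₁ h₂ => simp only [map_add, inner_add_left, h₁, h₂]
      | tmul a f =>
        induction y with
        | zero => simp
        | add y₁ y₂ h₁ h₂ => simp only [map_add, inner_add_right, h₁, h₂]
        | tmul b g =>
          have h₁ : ⟪S.starProjection f, Sᗮ.starProjection g⟫_𝕜 = 0 :=
            S.inner_right_of_mem_orthogonal (S.starProjection_apply_mem f)
              (Sᗮ.starProjection_apply_mem g)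
          have h₂ : ⟪Sᗮ.starProjection f, S.starProjection g⟫_𝕜 = 0 :=
            S.inner_left_of_mem_orthogonal (S.starProjection_apply_mem g)
              (Sᗮ.starProjection_apply_mem f)
          simp only [LinearMap.add_apply, TensorProduct.map_tmul, LinearMap.id_apply,
            LinearIsometry.coe_toLinearMap, ContinuousLinearMap.coe_coe, inner_add_left,
            inner_add_right, TensorProduct.inner_tmul, h₁, h₂, LinearIsometry.inner_map_map,
            mul_zero, add_zero, zero_add, ← mul_add,
            inner_starProjection_add_inner_starProjection_orthogonal]

variable (s : E →ₗᵢ[𝕜] E) (S : Submodule 𝕜 F) [S.HasOrthogonalProjection]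

theorem halfShift_tmul (a : E) (f : F) :
    halfShift s S (a ⊗ₜ f) = a ⊗ₜ S.starProjection f + s a ⊗ₜ Sᗮ.starProjection f :=
  rfl

variable {S}

theorem halfShift_tmul_of_mem {f : F} (hf : f ∈ S) (a : E) :
    halfShift s S (a ⊗ₜ f) = a ⊗ₜ f := by
  rw [halfShift_tmul, S.starProjection_eq_self_iff.mpr hf,
    Sᗮ.starProjection_apply_eq_zero_iff.mpr (S.le_orthogonal_orthogonal hf),
    TensorProduct.tmul_zero, add_zero]

theorem halfShift_tmul_of_mem_orthogonal {f : F} (hf : f ∈ Sᗮ) (a : E) :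
    halfShift s S (a ⊗ₜ f) = s a ⊗ₜ f := by
  rw [halfShift_tmul, S.starProjection_apply_eq_zero_iff.mpr hf,
    Sᗮ.starProjection_eq_self_iff.mpr hf, TensorProduct.tmul_zero, zero_add]

variable (S)

theorem halfShift_orthogonal_tmul (a : E) (f : F) :
    halfShift s Sᗮ (a ⊗ₜ f) = a ⊗ₜ Sᗮ.starProjection f + s a ⊗ₜ S.starProjection f := by
  simp only [halfShift_tmul, Submodule.orthogonal_orthogonal]

theorem halfShift_halfShift_orthogonal (x : E ⊗[𝕜] F) :
    halfShift s S (halfShift s Sᗮ x) = s.rTensor F x := by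
  induction x with
  | zero => simp only [map_zero]
  | add x y hx hy => simp only [map_add, hx, hy]
  | tmul a f =>
    rw [halfShift_orthogonal_tmul, map_add,
      halfShift_tmul_of_mem_orthogonal s (Sᗮ.starProjection_apply_mem f),
      halfShift_tmul_of_mem s (S.starProjection_apply_mem f), ← TensorProduct.tmul_add, add_comm,
      S.starProjection_add_starProjection_orthogonal]
    rfl

theorem halfShift_orthogonal_halfShift (x : E ⊗[𝕜] F) :
    halfShift s Sᗮ (halfShift s S x) = s.rTensor F x := by
  simpa only [Submodule.orthogonal_orthogonal] using halfShift_halfShift_orthogonal s Sᗮ x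

theorem inner_tmul_halfShift {e : E} (he : ∀ a, ⟪e, s a⟫_𝕜 = 0) {f : F} (hf : f ∈ Sᗮ)
    (x : E ⊗[𝕜] F) : ⟪e ⊗ₜ f, halfShift s S x⟫_𝕜 = 0 := by
  induction x with
  | zero => simp only [map_zero, inner_zero_right]
  | add x y hx hy => simp only [map_add, inner_add_right, hx, hy, add_zero]
  | tmul a g =>
    rw [halfShift_tmul, inner_add_right, TensorProduct.inner_tmul, TensorProduct.inner_tmul, he,
      S.inner_left_of_mem_orthogonal (S.starProjection_apply_mem g) hf, mul_zero, zero_mul,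
      add_zero]

theorem commute_halfShift_lTensor (U : F ≃ₗᵢ[𝕜] F) :
    Function.Commute (halfShift s S * (U.lTensor E).symm.toLinearIsometry)
      ((U.lTensor E).toLinearIsometry * halfShift s Sᗮ) := by
  intro x
  obtain ⟨x, rfl⟩ := (U.lTensor E).surjective x
  have hcomm : U.lTensor E (s.rTensor F x) = s.rTensor F (U.lTensor E x) := by
    induction x with
    | zero => simp only [map_zero]
    | add x y hx hy => simp only [map_add, hx, hy]
    | tmul a f => rfl
  calc
    halfShift s S ((U.lTensor E).symm (U.lTensor E (halfShift s Sᗮ (U.lTensor E x))))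
      = s.rTensor F (U.lTensor E x) := by
        rw [LinearIsometryEquiv.symm_apply_apply, halfShift_halfShift_orthogonal]
    _ = U.lTensor E (halfShift s Sᗮ (halfShift s S ((U.lTensor E).symm (U.lTensor E x)))) := by
        rw [LinearIsometryEquiv.symm_apply_apply, halfShift_orthogonal_halfShift, hcomm]

theorem tmul_add_halfShift_lTensor_symm {U : F ≃ₗᵢ[𝕜] F} {f f' g g' : F} (hf : f ∈ Sᗮ) (hg : g ∈ S)
    (hU : U (f + g') = f' + g) (a : E) :
    a ⊗ₜ f' + halfShift s S ((U.lTensor E).symm (a ⊗ₜ U g)) =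
      a ⊗ₜ U g' + U.lTensor E (halfShift s Sᗮ (a ⊗ₜ f)) :=
  calc
    a ⊗ₜ f' + halfShift s S ((U.lTensor E).symm (U.lTensor E (a ⊗ₜ g)))
      = a ⊗ₜ[𝕜] U (g' + f) := by
        rw [LinearIsometryEquiv.symm_apply_apply, halfShift_tmul_of_mem s hg,
          ← TensorProduct.tmul_add, add_comm g', hU]
    _ = a ⊗ₜ U g' + U.lTensor E (halfShift s Sᗮ (a ⊗ₜ f)) := by
        rw [halfShift_tmul_of_mem s hf, map_add, TensorProduct.tmul_add]
        rfl

end HalfShift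

theorem exists_isometry_orthogonal_unit :
    ∃ (s : lp (fun _ : ℕ => 𝕜) 2 →ₗᵢ[𝕜] lp (fun _ : ℕ => 𝕜) 2) (e : lp (fun _ : ℕ => 𝕜) 2),
      ‖e‖ = 1 ∧ ∀ x, ⟪e, s x⟫_𝕜 = 0 := by
  let b : HilbertBasis ℕ 𝕜 (lp (fun _ : ℕ => 𝕜) 2) := default
  have hb : Orthonormal 𝕜 fun n => b (n + 1) := b.orthonormal.comp _ (add_left_injective 1)
  refine ⟨hb.orthogonalFamily.linearIsometry, b 0, b.orthonormal.1 0, fun x => ?_⟩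
  have hx := (hb.orthogonalFamily.hasSum_linearIsometry x).mapL (innerSL 𝕜 (b 0))
  refine hx.unique ?_
  simp [b.orthonormal.inner_eq_zero, hasSum_zero]

section Ando

variable {H : Type u} [NormedAddCommGroup H] [InnerProductSpace 𝕜 H]

theorem exists_unitary_defect_intertwining (A B : H →L[𝕜] H) (hA : ‖A‖ ≤ 1) (hB : ‖B‖ ≤ 1)
    (hAB : Commute A B) :
    ∃ (F : Type u) (_ : NormedAddCommGroup F) (_ : InnerProductSpace 𝕜 F) (_ : CompleteSpace F)
      (dA dB : H →ₗ[𝕜] F) (U : F ≃ₗᵢ[𝕜] F),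
      (∀ x, ‖dA x‖ ^ 2 = ‖x‖ ^ 2 - ‖A x‖ ^ 2) ∧ (∀ x, ‖dB x‖ ^ 2 = ‖x‖ ^ 2 - ‖B x‖ ^ 2) ∧
      (∀ x y, ⟪dA x, dB y⟫_𝕜 = 0) ∧ ∀ x, U (dA x + dB (A x)) = dA (B x) + dB x := by
  obtain ⟨D, _, _, _, a, ha⟩ := exists_defect_map A hA
  obtain ⟨D', _, _, _, b, hb⟩ := exists_defect_map B hB
  let α : H →ₗ[𝕜] WithLp 2 (D × D') := (prodInl 𝕜 D D').toLinearMap ∘ₗ a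
  let β : H →ₗ[𝕜] WithLp 2 (D × D') := (prodInr 𝕜 D D').toLinearMap ∘ₗ b
  have hnorm (x y : H) : ‖α x + β y‖ ^ 2 = ‖x‖ ^ 2 - ‖A x‖ ^ 2 + (‖y‖ ^ 2 - ‖B y‖ ^ 2) := by
    rw [← ha, ← hb]
    exact (congrArg (‖·‖ ^ 2) (prodInl_add_prodInr 𝕜 (a x) (b y))).trans
      (WithLp.prod_norm_sq_eq_of_L2 _)
  have hcc' (x : H) : ‖α (B x) + β x‖ = ‖α x + β (A x)‖ := by
    have hABx : A (B x) = B (A x) := DFunLike.congr_fun hAB.eq x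
    rw [← sq_eq_sq₀ (norm_nonneg _) (norm_nonneg _), hnorm, hnorm, hABx]
    ring
  obtain ⟨F, _, _, _, ι, U, hU⟩ :=
    exists_unitary_intertwining (α + β ∘ₗ A.toLinearMap) (α ∘ₗ B.toLinearMap + β) hcc'
  refine ⟨F, ‹_›, ‹_›, ‹_›, ι.toLinearMap ∘ₗ α, ι.toLinearMap ∘ₗ β, U, fun x => ?_, fun x => ?_,
    fun x y => (ι.inner_map_map _ _).trans (inner_prodInl_prodInr 𝕜 _ _), fun x => ?_⟩
  · exact (congrArg (· ^ 2) (((ι.norm_map _).trans ((prodInl 𝕜 D D').norm_map _)))).trans (ha x)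
  · exact (congrArg (· ^ 2) (((ι.norm_map _).trans ((prodInr 𝕜 D D').norm_map _)))).trans (hb x)
  · simpa using hU x

theorem exists_isometric_dilation (A B : H →L[𝕜] H) (hA : ‖A‖ ≤ 1) (hB : ‖B‖ ≤ 1)
    (hAB : Commute A B) :
    ∃ (L : Type (max u v)) (_ : NormedAddCommGroup L) (_ : InnerProductSpace 𝕜 L)
      (V W : WithLp 2 (H × L) →ₗᵢ[𝕜] WithLp 2 (H × L)), Commute V W ∧
        Function.Semiconj WithLp.fst V A ∧ Function.Semiconj WithLp.fst W B := by
  obtain ⟨F, _, _, _, dA, dB, U, hdA, hdB, horth, hU⟩ :=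
    exists_unitary_defect_intertwining A B hA hB hAB
  obtain ⟨s, e, he, hes⟩ := exists_isometry_orthogonal_unit (𝕜 := 𝕜)
  let S : Submodule 𝕜 F := (LinearMap.range dA)ᗮ
  have hSA (x : H) : dA x ∈ Sᗮ :=
    Submodule.le_orthogonal_orthogonal _ (LinearMap.mem_range_self dA x)
  have hSB (x : H) : dB x ∈ S := by
    rintro _ ⟨y, rfl⟩
    exact horth y x
  let u := U.lTensor (lp (fun _ : ℕ => 𝕜) 2)
  let τ₁ := halfShift s S * u.symm.toLinearIsometry
  let τ₂ := u.toLinearIsometry * halfShift s Sᗮ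
  let D₁ := TensorProduct.mk 𝕜 _ F e ∘ₗ dA
  let D₂ := TensorProduct.mk 𝕜 _ F e ∘ₗ U.toLinearMap ∘ₗ dB
  have hnorm₁ (x : H) : ‖D₁ x‖ ^ 2 = ‖x‖ ^ 2 - ‖A x‖ ^ 2 := by
    rw [← hdA]
    simp [D₁, TensorProduct.norm_tmul, he]
  have hnorm₂ (x : H) : ‖D₂ x‖ ^ 2 = ‖x‖ ^ 2 - ‖B x‖ ^ 2 := by
    rw [← hdB]
    simp [D₂, TensorProduct.norm_tmul, he]
  have horth₁ (x : H) (l) : ⟪D₁ x, τ₁ l⟫_𝕜 = 0 :=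
    inner_tmul_halfShift s S hes (hSA x) _
  have horth₂ (x : H) (l) : ⟪D₂ x, τ₂ l⟫_𝕜 = 0 :=
    (u.inner_map_map (e ⊗ₜ dB x) _).trans
      (inner_tmul_halfShift s Sᗮ hes (S.le_orthogonal_orthogonal (hSB x)) _)
  have hD (x : H) : D₁ (B x) + τ₁ (D₂ x) = D₂ (A x) + τ₂ (D₁ x) :=
    tmul_add_halfShift_lTensor_symm s S (hSA x) (hSB x) (hU x) e
  exact ⟨_, _, _, schaefferIsometry A.toLinearMap D₁ τ₁ hnorm₁ horth₁,
    schaefferIsometry B.toLinearMap D₂ τ₂ hnorm₂ horth₂,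
    commute_schaefferIsometry hnorm₁ horth₁ hnorm₂ horth₂ (DFunLike.congr_fun hAB.eq) hD
      (commute_halfShift_lTensor s S U), fun _ => rfl, fun _ => rfl⟩

theorem ando_dilation_general (A B : H →L[𝕜] H) (hA : ‖A‖ ≤ 1) (hB : ‖B‖ ≤ 1)
    (hAB : Commute A B) :
    ∃ (K : Type (max u v)) (_ : NormedAddCommGroup K) (_ : InnerProductSpace 𝕜 K)
      (_ : CompleteSpace K) (ι : H →ₗᵢ[𝕜] K) (U V : K →L[𝕜] K),
      U ∈ unitary (K →L[𝕜] K) ∧ V ∈ unitary (K →L[𝕜] K) ∧ Commute U V ∧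
      ∀ (m n : ℕ) (x y : H),
        ⟪ι ((A ^ m * B ^ n) x), ι y⟫_𝕜 = ⟪(U ^ m * V ^ n) (ι x), ι y⟫_𝕜 := by
  obtain ⟨L, _, _, V₁, V₂, hV, hA₁, hB₂⟩ := exists_isometric_dilation A B hA hB hAB
  obtain ⟨K, _, _, _, κ, U₁, U₂, hU, hκ₁, hκ₂⟩ := exists_unitary_extension V₁ V₂ hV
  refine ⟨K, ‹_›, ‹_›, ‹_›, κ.comp (prodInl 𝕜 H L), Unitary.linearIsometryEquiv.symm U₁,
    Unitary.linearIsometryEquiv.symm U₂, Subtype.prop _, Subtype.prop _, ?_, fun m n x y => ?_⟩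
  · exact congrArg Subtype.val (hU.map Unitary.linearIsometryEquiv.symm).eq
  · have hκ : Function.Semiconj κ (V₁^[m] ∘ V₂^[n]) (U₁^[m] ∘ U₂^[n]) :=
      (hκ₁.iterate_right m).comp_right (hκ₂.iterate_right n)
    have hfst : Function.Semiconj WithLp.fst (V₁^[m] ∘ V₂^[n]) (A^[m] ∘ B^[n]) :=
      (hA₁.iterate_right m).comp_right (hB₂.iterate_right n)
    calc
      ⟪κ (prodInl 𝕜 H L ((A ^ m * B ^ n) x)), κ (prodInl 𝕜 H L y)⟫_𝕜
        = ⟪((V₁^[m] ∘ V₂^[n]) (prodInl 𝕜 H L x)).fst, y⟫_𝕜 := by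
          rw [κ.inner_map_map, inner_prodInl_right, hfst]
          simp [prodInl]
      _ = ⟪(U₁^[m] ∘ U₂^[n]) (κ (prodInl 𝕜 H L x)), κ (prodInl 𝕜 H L y)⟫_𝕜 := by
          rw [← hκ, κ.inner_map_map, inner_prodInl_right]
      _ = _ := by simp

end Ando

/-- Ando's dilation theorem: any two commuting contractions on a Hilbert space have
commuting unitary dilations. -/
theorem ando_dilation {H : Type u} [NormedAddCommGroup H] [InnerProductSpace ℂ H]
    [CompleteSpace H] (A B : H →L[ℂ] H) (hA : ‖A‖ ≤ 1) (hB : ‖B‖ ≤ 1) (hAB : Commute A B) :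
    ∃ (K : Type u) (_ : NormedAddCommGroup K) (_ : InnerProductSpace ℂ K) (_ : CompleteSpace K)
      (ι : H →ₗᵢ[ℂ] K) (U V : K →L[ℂ] K),
      U ∈ unitary (K →L[ℂ] K) ∧ V ∈ unitary (K →L[ℂ] K) ∧ Commute U V ∧
      ∀ (m n : ℕ) (x y : H),
        ⟪ι ((A ^ m * B ^ n) x), ι y⟫_ℂ = ⟪(U ^ m * V ^ n) (ι x), ι y⟫_ℂ :=
  ando_dilation_general A B hA hB hAB
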